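/- Let {D_ν}_{ν≥0} be a nonincreasing sequence of nonnegative reals with D_ν → 0, let θ ∈ (0,1) and M̃ > 0, and suppose D_ν ≤ M̃ (D_ν − D_{ν+1})^{(1−θ)/θ} for all ν ≥ ν̄. Then: (i) if θ ∈ (0, 1/2], there exist C > 0, τ ∈ [0,1) and ν₀ ≥ ν̄ such that D_ν ≤ C τ^ν for all ν ≥ ν₀ (indeed D_{ν+1} ≤ ((M̃−1)/M̃) D_ν for all sufficiently large ν when M̃ > 1); (ii) if θ ∈ (1/2, 1), there exist C > 0 and ν₀ ≥ ν̄ such that D_ν ≤ C ν^{−(1−θ)/(2θ−1)} for all ν ≥ ν₀. -/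

import Mathlib

open Filter Topology

/-!
Write `p = (1 - θ) / θ`.

If `θ ≤ 1 / 2`, then `p ≥ 1`. Once `D ν ≤ 1`, the step `D ν - D (ν + 1)` lies in `[0, 1]`, so its
`p`-th power is at most the step itself and the recursion becomes the linear inequality
`D ν ≤ Mt * (D ν - D (ν + 1))`, which is a geometric contraction.

If `1 / 2 < θ`, put `s = 1 / p - 1 > 0`. Inverting the power turns the recursion into
`D ν - D (ν + 1) ≥ c * D ν ^ (s + 1)` with `c = Mt⁻¹ ^ (s + 1)`. Since `x ↦ x ^ (-s)` is convex, it
lies above its tangent at `D ν`, and hence `D (ν + 1) ^ (-s) ≥ D ν ^ (-s) + s * c`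
(`rpow_neg_step`). So `D ν ^ (-s)` grows at least linearly in `ν`, which gives
`D ν = O(ν ^ (-1 / s))`.
-/

/-- The tangent-line inequality at `1` for the convex function `x ↦ x ^ (-s)`. -/
lemma tangent_le_rpow_neg {s x : ℝ} (hs : 0 ≤ s) (hx : 0 < x) :
    1 + s * (1 - x) ≤ x ^ (-s) := by
  rw [Real.rpow_def_of_pos hx]
  have h1 := Real.add_one_le_exp (Real.log x * -s)
  have h2 := mul_le_mul_of_nonneg_left (Real.log_le_sub_one_of_pos hx) hs
  linarith

/-- A decrease by at least `c * a ^ (s + 1)` raises the power `-s` by at least `s * c`. -/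
lemma rpow_neg_step {s c a b : ℝ} (hs : 0 ≤ s) (ha : 0 < a) (hb : 0 < b)
    (h : c * a ^ (s + 1) ≤ a - b) : a ^ (-s) + s * c ≤ b ^ (-s) := by
  have ht := tangent_le_rpow_neg hs (div_pos hb ha)
  have has : 0 < a ^ s := Real.rpow_pos_of_pos ha s
  have hc : c * a ^ s ≤ 1 - b / a := by
    rw [Real.rpow_add_one ha.ne'] at h
    rw [one_sub_div ha.ne', le_div_iff₀ ha]
    linarith
  have hm : a ^ (-s) * (1 + s * (c * a ^ s)) ≤ a ^ (-s) * (b / a) ^ (-s) := by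
    gcongr
    nlinarith [mul_le_mul_of_nonneg_left hc hs]
  rw [← Real.mul_rpow ha.le (div_pos hb ha).le, mul_div_cancel₀ b ha.ne', Real.rpow_neg ha.le] at hm
  rw [Real.rpow_neg ha.le]
  calc (a ^ s)⁻¹ + s * c = (a ^ s)⁻¹ * (1 + s * (c * a ^ s)) := by field_simp
    _ ≤ _ := hm

/-- In the regime `θ ≤ 1 / 2` the recursion is eventually linear. -/
lemma eventually_linear_recursion
    (D : ℕ → ℝ) (hDnn : ∀ ν, 0 ≤ D ν) (hDmono : ∀ ν, D (ν + 1) ≤ D ν)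
    (hDlim : Tendsto D atTop (𝓝 0)) {p Mt : ℝ} (hp : 1 ≤ p) (hMt : 0 < Mt)
    (N : ℕ) (hrec : ∀ ν ≥ N, D ν ≤ Mt * (D ν - D (ν + 1)) ^ p) :
    ∃ ν₀, ∀ ν ≥ ν₀, D ν ≤ Mt * (D ν - D (ν + 1)) := by
  obtain ⟨K, hK⟩ := eventually_atTop.1 (hDlim.eventually (eventually_le_nhds zero_lt_one))
  refine ⟨max N K, fun ν hν => (hrec ν (le_of_max_le_left hν)).trans ?_⟩
  have h1 := hK ν (le_of_max_le_right hν)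
  gcongr
  exact Real.rpow_le_self_of_le_one (sub_nonneg.2 (hDmono ν)) (by linarith [hDnn (ν + 1)]) hp

lemma geometric_decay {D : ℕ → ℝ} {τ : ℝ} (hDnn : ∀ ν, 0 ≤ D ν) (hτ : 0 < τ) {ν₀ : ℕ}
    (h : ∀ ν ≥ ν₀, D (ν + 1) ≤ τ * D ν) :
    ∃ C > (0 : ℝ), ∀ ν ≥ ν₀, D ν ≤ C * τ ^ ν := by
  -- The summand `1` keeps the constant positive when `D ν₀ = 0`.
  refine ⟨D ν₀ / τ ^ ν₀ + 1, by have := hDnn ν₀; positivity, fun ν hν => ?_⟩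
  induction ν, hν using Nat.le_induction with
  | base =>
    rw [add_mul, div_mul_cancel₀ _ (by positivity)]
    have : 0 < τ ^ ν₀ := by positivity
    linarith
  | succ ν hν ih =>
    calc D (ν + 1) ≤ τ * D ν := h ν hν
      _ ≤ τ * ((D ν₀ / τ ^ ν₀ + 1) * τ ^ ν) := by gcongr
      _ = _ := by ring

/-- Linear growth of `D ν ^ (-s)`, in the regime `1 / 2 < θ`. Positivity is required because
`0 ^ (-s) = 0`. -/
lemma linear_growth_rpow_neg {D : ℕ → ℝ} (hDmono : ∀ ν, D (ν + 1) ≤ D ν)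
    {s c : ℝ} (hs : 0 ≤ s) {N : ℕ}
    (h : ∀ ν ≥ N, c * D ν ^ (s + 1) ≤ D ν - D (ν + 1)) (k : ℕ) (hk : 0 < D (N + k)) :
    s * c * k ≤ D (N + k) ^ (-s) := by
  induction k with
  | zero => simpa using Real.rpow_nonneg hk.le (-s)
  | succ k ih =>
    have hpos : 0 < D (N + k) := hk.trans_le (hDmono _)
    have := rpow_neg_step hs hpos hk (h (N + k) (by omega))
    have := ih hpos
    push_cast
    rw [← add_assoc] at *
    linarith

theorem kl_rate_sequence_estimate
    (D : ℕ → ℝ) (hDnn : ∀ ν, 0 ≤ D ν) (hDmono : ∀ ν, D (ν + 1) ≤ D ν)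
    (hDlim : Tendsto D atTop (𝓝 0))
    (θ Mt : ℝ) (hθ0 : 0 < θ) (hθ1 : θ < 1) (hMt : 0 < Mt)
    (N : ℕ) (hrec : ∀ ν ≥ N, D ν ≤ Mt * (D ν - D (ν + 1)) ^ ((1 - θ) / θ)) :
    (θ ≤ 1 / 2 →
      (∃ C > (0:ℝ), ∃ τ ∈ Set.Ico (0:ℝ) 1, ∃ ν₀, ∀ ν ≥ ν₀, D ν ≤ C * τ ^ ν) ∧
      (1 < Mt → ∃ ν₀, ∀ ν ≥ ν₀, D (ν + 1) ≤ ((Mt - 1) / Mt) * D ν)) ∧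
    (1 / 2 < θ →
      ∃ C > (0:ℝ), ∃ ν₀, ∀ ν ≥ ν₀, D ν ≤ C * (ν : ℝ) ^ (-(1 - θ) / (2 * θ - 1))) := by
  constructor
  · intro hθ
    have hp : 1 ≤ (1 - θ) / θ := by rw [le_div_iff₀ hθ0]; linarith
    obtain ⟨ν₀, hlin⟩ := eventually_linear_recursion D hDnn hDmono hDlim hp hMt N hrec
    refine ⟨?_, fun _ => ⟨ν₀, fun ν hν => ?_⟩⟩
    -- Replacing `Mt` by `Mt + 1` makes the ratio positive for every `Mt > 0`.
    · have hτ : 0 < Mt / (Mt + 1) := by positivity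
      obtain ⟨C, hC, hb⟩ := geometric_decay (ν₀ := ν₀) hDnn hτ fun ν hν => by
        rw [div_mul_eq_mul_div, le_div_iff₀ (by positivity)]
        linarith [hlin ν hν, hDmono ν]
      exact ⟨C, hC, _, ⟨hτ.le, by rw [div_lt_one (by positivity)]; linarith⟩, ν₀, hb⟩
    · rw [div_mul_eq_mul_div, le_div_iff₀ hMt]
      linarith [hlin ν hν]
  · intro hθ
    have h1 : 0 < 1 - θ := by linarith
    have h2 : 0 < 2 * θ - 1 := by linarith
    obtain ⟨s, hs⟩ : ∃ s, s = (2 * θ - 1) / (1 - θ) := ⟨_, rfl⟩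
    have hs0 : 0 < s := hs ▸ div_pos h2 h1
    have hexp : -(1 - θ) / (2 * θ - 1) = (-s)⁻¹ := by rw [hs, inv_neg, inv_div, neg_div]
    have hsp : ((1 - θ) / θ) * (s + 1) = 1 := by rw [hs]; field_simp; ring
    obtain ⟨c, hc⟩ : ∃ c, c = Mt⁻¹ ^ (s + 1) := ⟨_, rfl⟩
    have hc0 : 0 < c := hc ▸ Real.rpow_pos_of_pos (inv_pos.2 hMt) _
    have hstep : ∀ ν ≥ N, c * D ν ^ (s + 1) ≤ D ν - D (ν + 1) := fun ν hν => by
      have hd : 0 ≤ D ν - D (ν + 1) := sub_nonneg.2 (hDmono ν)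
      have hDν := hDnn ν
      rw [hc, ← Real.mul_rpow (by positivity) hDν]
      calc (Mt⁻¹ * D ν) ^ (s + 1) ≤ ((D ν - D (ν + 1)) ^ ((1 - θ) / θ)) ^ (s + 1) := by
            gcongr
            rw [inv_mul_le_iff₀ hMt]
            exact hrec ν hν
        _ = D ν - D (ν + 1) := by rw [← Real.rpow_mul hd, hsp, Real.rpow_one]
    rw [hexp]
    -- For `ν ≥ 2 * N` the number `ν - N` of steps taken is at least `ν / 2`.
    refine ⟨(s * c / 2) ^ (-s)⁻¹, by positivity, 2 * N + 1, fun ν hν => ?_⟩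
    rcases (hDnn ν).eq_or_lt with h0 | hpos
    · rw [← h0]; positivity
    obtain ⟨k, rfl⟩ : ∃ k, ν = N + k := ⟨ν - N, by omega⟩
    have hg := linear_growth_rpow_neg hDmono hs0.le hstep k hpos
    have hNk : (N : ℝ) ≤ k := by exact_mod_cast (by omega : N ≤ k)
    have hν0 : (0 : ℝ) < (N + k : ℕ) := by exact_mod_cast (by omega : 0 < N + k)
    have hle : s * c / 2 * (N + k : ℕ) ≤ D (N + k) ^ (-s) := by
      refine le_trans ?_ hg
      push_cast
      nlinarith [mul_le_mul_of_nonneg_left hNk (mul_pos hs0 hc0).le]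
    calc D (N + k) = (D (N + k) ^ (-s)) ^ (-s)⁻¹ :=
          (Real.rpow_rpow_inv hpos.le (neg_ne_zero.2 hs0.ne')).symm
      _ ≤ (s * c / 2 * (N + k : ℕ)) ^ (-s)⁻¹ :=
          Real.rpow_le_rpow_of_nonpos (by positivity) hle (inv_nonpos.2 (neg_nonpos.2 hs0.le))
      _ = _ := Real.mul_rpow (by positivity) hν0.le
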